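/- arXiv:1811.06353 — 2 statements merged into one kernel-verified Lean document; each statement's English description precedes it below -/
import Mathlib

section
/- Let 0 ≤ a < b be real numbers, let ψ : (0,∞) → (0,∞) be twice differentiable with t ↦ t·ψ'(t)/ψ(t) increasing on (0,∞), let h : [a,b] → [0,∞) be a nonnegative integrable function, let δ > 0 and σ ∈ ℝ, σ ≠ 0. For z > 0 define K(z) = (∫_a^b t^{δ-1} h(t) (ψ(zt))^σ dt) / (∫_a^b t^{-1} h(t) (ψ(zt))^σ dt), assuming all integrals involved are finite and the denominator is positive for every z > 0. Then K is increasing on (0,∞) if σ > 0 and decreasing on (0,∞) if σ < 0. If instead t ↦ t·ψ'(t)/ψ(t) is decreasing on (0,∞), then K is decreasing if σ > 0 and increasing if σ < 0. -/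
open MeasureTheory

/-- The ratio `K(z)` of the two weighted integrals of the kernel `h` against powers of `ψ`. -/
noncomputable def Kratio (a b δ σ : ℝ) (ψ h : ℝ → ℝ) (z : ℝ) : ℝ :=
  (∫ t in a..b, t ^ (δ - 1) * h t * (ψ (z * t)) ^ σ) /
    (∫ t in a..b, t ^ (-1 : ℝ) * h t * (ψ (z * t)) ^ σ)

/-- Chebyshev type inequality, by iterated integration. -/
lemma cheb_aux (a b : ℝ) (hab : a < b) (u v U V : ℝ → ℝ)
    (hu : IntervalIntegrable u volume a b) (hv : IntervalIntegrable v volume a b)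
    (hU : IntervalIntegrable U volume a b) (hV : IntervalIntegrable V volume a b)
    (H : ∀ s ∈ Set.Ioo a b, ∀ t ∈ Set.Ioo a b,
      0 ≤ V t * u s - U t * v s - v t * U s + u t * V s) :
    (∫ t in a..b, U t) * (∫ t in a..b, v t) ≤ (∫ t in a..b, V t) * (∫ t in a..b, u t) := by
  have comb : ∀ c1 c2 c3 c4 : ℝ,
      (∀ t ∈ Set.Ioo a b, 0 ≤ V t * c1 - U t * c2 - v t * c3 + u t * c4) →
      0 ≤ (∫ t in a..b, V t) * c1 - (∫ t in a..b, U t) * c2 - (∫ t in a..b, v t) * c3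
        + (∫ t in a..b, u t) * c4 := by
    intro c1 c2 c3 c4 h
    have e : (∫ t in a..b, (V t * c1 - U t * c2 - v t * c3 + u t * c4)) =
        (∫ t in a..b, V t) * c1 - (∫ t in a..b, U t) * c2 - (∫ t in a..b, v t) * c3
        + (∫ t in a..b, u t) * c4 := by
      rw [intervalIntegral.integral_add
          (((hV.mul_const c1).sub (hU.mul_const c2)).sub (hv.mul_const c3)) (hu.mul_const c4),
        intervalIntegral.integral_sub ((hV.mul_const c1).sub (hU.mul_const c2)) (hv.mul_const c3),
        intervalIntegral.integral_sub (hV.mul_const c1) (hU.mul_const c2)]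
      simp only [intervalIntegral.integral_mul_const]
    rw [← e, intervalIntegral.integral_of_le hab.le, integral_Ioc_eq_integral_Ioo]
    exact setIntegral_nonneg measurableSet_Ioo h
  have h1 := fun s hs => comb (u s) (v s) (U s) (V s) (H s hs)
  have h2 := comb (∫ t in a..b, u t) (∫ t in a..b, v t) (∫ t in a..b, U t) (∫ t in a..b, V t)
    (fun s hs => by have := h1 s hs; linarith)
  linarith

lemma quot_aux (σ x y : ℝ) (ψ : ℝ → ℝ) (hx : 0 < x) (hy : 0 < y)
    (hψpos : ∀ t ∈ Set.Ioi (0 : ℝ), 0 < ψ t)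
    (hψdiff : ContDiffOn ℝ 2 ψ (Set.Ioi 0))
    (H : ∀ t, 0 < t → 0 ≤ σ * ((y * t) * deriv ψ (y * t) / ψ (y * t)
      - (x * t) * deriv ψ (x * t) / ψ (x * t)))
    (s t : ℝ) (hs : 0 < s) (hst : s ≤ t) :
    ψ (y * s) ^ σ * ψ (x * t) ^ σ ≤ ψ (y * t) ^ σ * ψ (x * s) ^ σ := by
  have hd : ∀ w, 0 < w → ∀ t, 0 < t →
      HasDerivAt (fun t => Real.log (ψ (w * t))) (deriv ψ (w * t) * w / ψ (w * t)) t := by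
    intro w hw t ht
    have hwt : 0 < w * t := mul_pos hw ht
    have h1 : HasDerivAt ψ (deriv ψ (w * t)) (w * t) :=
      ((hψdiff.differentiableOn (by norm_num)).differentiableAt
        (Ioi_mem_nhds hwt)).hasDerivAt
    have h2 : HasDerivAt (fun t => w * t) w t := by
      simpa using (hasDerivAt_id t).const_mul w
    exact (HasDerivAt.comp t h1 h2).log (hψpos _ hwt).ne'
  have hG : ∀ t, 0 < t → HasDerivAt
      (fun t => σ * (Real.log (ψ (y * t)) - Real.log (ψ (x * t))))
      (σ * (deriv ψ (y * t) * y / ψ (y * t) - deriv ψ (x * t) * x / ψ (x * t))) t :=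
    fun t ht => ((hd y hy t ht).sub (hd x hx t ht)).const_mul σ
  have mono : MonotoneOn (fun t => σ * (Real.log (ψ (y * t)) - Real.log (ψ (x * t))))
      (Set.Ioi 0) := by
    apply monotoneOn_of_deriv_nonneg (convex_Ioi 0)
    · exact fun t ht => (hG t ht).continuousAt.continuousWithinAt
    · rw [interior_Ioi]
      exact fun t ht => (hG t ht).differentiableAt.differentiableWithinAt
    · rw [interior_Ioi]
      intro t ht
      have ht' : 0 < t := ht
      rw [(hG t ht).deriv]
      have h1 := H t ht
      have e : σ * ((y * t) * deriv ψ (y * t) / ψ (y * t)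
        - (x * t) * deriv ψ (x * t) / ψ (x * t)) =
        t * (σ * (deriv ψ (y * t) * y / ψ (y * t) - deriv ψ (x * t) * x / ψ (x * t))) := by
        ring
      rw [e] at h1
      exact nonneg_of_mul_nonneg_right h1 ht'
  have ht : 0 < t := lt_of_lt_of_le hs hst
  have h3 := mono hs ht hst
  simp only at h3
  rw [Real.rpow_def_of_pos (hψpos _ (mul_pos hy hs)), Real.rpow_def_of_pos (hψpos _ (mul_pos hx ht)),
    Real.rpow_def_of_pos (hψpos _ (mul_pos hy ht)), Real.rpow_def_of_pos (hψpos _ (mul_pos hx hs)),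
    ← Real.exp_add, ← Real.exp_add, Real.exp_le_exp]
  linarith

lemma core_aux (a b δ σ : ℝ) (ψ h : ℝ → ℝ)
    (ha : 0 ≤ a) (hab : a < b) (hδ : 0 < δ)
    (hψpos : ∀ t ∈ Set.Ioi (0 : ℝ), 0 < ψ t)
    (hψdiff : ContDiffOn ℝ 2 ψ (Set.Ioi 0))
    (hh : ∀ t ∈ Set.Icc a b, 0 ≤ h t)
    (hnum : ∀ z ∈ Set.Ioi (0 : ℝ),
      IntervalIntegrable (fun t => t ^ (δ - 1) * h t * (ψ (z * t)) ^ σ) volume a b)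
    (hden : ∀ z ∈ Set.Ioi (0 : ℝ),
      IntervalIntegrable (fun t => t ^ (-1 : ℝ) * h t * (ψ (z * t)) ^ σ) volume a b)
    (hdenpos : ∀ z ∈ Set.Ioi (0 : ℝ),
      0 < ∫ t in a..b, t ^ (-1 : ℝ) * h t * (ψ (z * t)) ^ σ)
    (x y : ℝ) (hx : 0 < x) (hy : 0 < y)
    (H : ∀ t, 0 < t → 0 ≤ σ * ((y * t) * deriv ψ (y * t) / ψ (y * t)
      - (x * t) * deriv ψ (x * t) / ψ (x * t))) :
    Kratio a b δ σ ψ h x ≤ Kratio a b δ σ ψ h y := by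
  unfold Kratio
  rw [div_le_div_iff₀ (hdenpos x hx) (hdenpos y hy)]
  apply cheb_aux a b hab _ _ _ _ (hden x hx) (hden y hy) (hnum x hx) (hnum y hy)
  intro s hs t ht
  have hs0 : 0 < s := lt_of_le_of_lt ha hs.1
  have ht0 : 0 < t := lt_of_le_of_lt ha ht.1
  have e : ∀ r : ℝ, 0 < r → r ^ (δ - 1) = r ^ δ * r ^ (-1 : ℝ) := fun r hr => by
    rw [← Real.rpow_add hr]; rfl
  rw [e s hs0, e t ht0]
  have key : 0 ≤ (t ^ δ - s ^ δ) *
      (ψ (y * t) ^ σ * ψ (x * s) ^ σ - ψ (y * s) ^ σ * ψ (x * t) ^ σ) := by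
    rcases le_total s t with hst | hst
    · have h1 := quot_aux σ x y ψ hx hy hψpos hψdiff H s t hs0 hst
      have h2 := Real.rpow_le_rpow hs0.le hst hδ.le
      exact mul_nonneg (by linarith) (by linarith)
    · have h1 := quot_aux σ x y ψ hx hy hψpos hψdiff H t s ht0 hst
      have h2 := Real.rpow_le_rpow ht0.le hst hδ.le
      exact mul_nonneg_of_nonpos_of_nonpos (by linarith) (by linarith)
  have k2 : 0 ≤ (t ^ (-1 : ℝ) * h t) * (s ^ (-1 : ℝ) * h s) :=
    mul_nonneg (mul_nonneg (Real.rpow_nonneg ht0.le _) (hh t ⟨ht.1.le, ht.2.le⟩))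
      (mul_nonneg (Real.rpow_nonneg hs0.le _) (hh s ⟨hs.1.le, hs.2.le⟩))
  have k3 := mul_nonneg k2 key
  refine k3.trans_eq ?_
  ring

/-- Kernel version of Theorem 4: monotonicity of the ratio of two weighted integrals of a
nonnegative kernel `h` against powers of `ψ`. -/
theorem kratio_monotonicity (a b δ σ : ℝ) (ψ h : ℝ → ℝ)
    (ha : 0 ≤ a) (hab : a < b) (hδ : 0 < δ) (hσ : σ ≠ 0)
    (hψpos : ∀ t ∈ Set.Ioi (0 : ℝ), 0 < ψ t)
    (hψdiff : ContDiffOn ℝ 2 ψ (Set.Ioi 0))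
    (hh : ∀ t ∈ Set.Icc a b, 0 ≤ h t)
    (hhint : IntegrableOn h (Set.Icc a b))
    (hnum : ∀ z ∈ Set.Ioi (0 : ℝ),
      IntervalIntegrable (fun t => t ^ (δ - 1) * h t * (ψ (z * t)) ^ σ) volume a b)
    (hden : ∀ z ∈ Set.Ioi (0 : ℝ),
      IntervalIntegrable (fun t => t ^ (-1 : ℝ) * h t * (ψ (z * t)) ^ σ) volume a b)
    (hdenpos : ∀ z ∈ Set.Ioi (0 : ℝ),
      0 < ∫ t in a..b, t ^ (-1 : ℝ) * h t * (ψ (z * t)) ^ σ) :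
    (MonotoneOn (fun t => t * deriv ψ t / ψ t) (Set.Ioi 0) →
      ((0 < σ → MonotoneOn (Kratio a b δ σ ψ h) (Set.Ioi 0)) ∧
        (σ < 0 → AntitoneOn (Kratio a b δ σ ψ h) (Set.Ioi 0)))) ∧
    (AntitoneOn (fun t => t * deriv ψ t / ψ t) (Set.Ioi 0) →
      ((0 < σ → AntitoneOn (Kratio a b δ σ ψ h) (Set.Ioi 0)) ∧
        (σ < 0 → MonotoneOn (Kratio a b δ σ ψ h) (Set.Ioi 0)))) := by
  have core := core_aux a b δ σ ψ h ha hab hδ hψpos hψdiff hh hnum hden hdenpos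
  have sc : ∀ x y t : ℝ, x ≤ y → 0 < t → x * t ≤ y * t :=
    fun x y t hxy ht => mul_le_mul_of_nonneg_right hxy ht.le
  refine ⟨fun M => ⟨fun hs x hx y hy hxy => ?_, fun hs x hx y hy hxy => ?_⟩,
    fun M => ⟨fun hs x hx y hy hxy => ?_, fun hs x hx y hy hxy => ?_⟩⟩
  · refine core x y hx hy fun t ht => ?_
    have := M (mul_pos hx ht) (mul_pos hy ht) (sc x y t hxy ht)
    exact mul_nonneg hs.le (sub_nonneg.2 this)
  · refine core y x hy hx fun t ht => ?_
    have := M (mul_pos hx ht) (mul_pos hy ht) (sc x y t hxy ht)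
    exact mul_nonneg_of_nonpos_of_nonpos hs.le (sub_nonpos.2 this)
  · refine core y x hy hx fun t ht => ?_
    have := M (mul_pos hx ht) (mul_pos hy ht) (sc x y t hxy ht)
    exact mul_nonneg hs.le (sub_nonneg.2 this)
  · refine core x y hx hy fun t ht => ?_
    have := M (mul_pos hx ht) (mul_pos hy ht) (sc x y t hxy ht)
    exact mul_nonneg_of_nonpos_of_nonpos hs.le (sub_nonpos.2 this)
end

section
/- Let c > b > 0, τ > 0 and δ > 0. Then the function z ↦ φ^τ(b+δτ, c+δτ, −z) / φ^τ(b, c, −z) is decreasing on (0,1). -/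
/-- The τ-Kummer hypergeometric function
`φ^τ(b,c,z) = ∑ₖ (Γ(b+kτ)/Γ(c+kτ)) · zᵏ/k!`. -/
noncomputable def kummerTau (τ b c z : ℝ) : ℝ :=
  ∑' k : ℕ, Real.Gamma (b + (k : ℝ) * τ) / Real.Gamma (c + (k : ℝ) * τ) * z ^ k /
    (Nat.factorial k : ℝ)

open MeasureTheory Set in
theorem beta_aux {p q : ℝ} (hp : 0 < p) (hq : 0 < q) :
    IntegrableOn (fun t : ℝ => t ^ (p - 1) * (1 - t) ^ (q - 1)) (Ioo 0 1) ∧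
    ∫ t in Ioo (0:ℝ) 1, t ^ (p - 1) * (1 - t) ^ (q - 1) =
      Real.Gamma p * Real.Gamma q / Real.Gamma (p + q) := by
  have h1 := Complex.betaIntegral_convergent (u := (p : ℂ)) (v := (q : ℂ)) (by simpa) (by simpa)
  rw [intervalIntegrable_iff_integrableOn_Ioo_of_le zero_le_one] at h1
  have hcongr : EqOn (fun x : ℝ => (x : ℂ) ^ ((p : ℂ) - 1) * (1 - (x : ℂ)) ^ ((q : ℂ) - 1))
      (fun x : ℝ => ((x ^ (p - 1) * (1 - x) ^ (q - 1) : ℝ) : ℂ)) (Ioo 0 1) := by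
    intro x hx
    simp only
    rw [Complex.ofReal_mul, Complex.ofReal_cpow hx.1.le, Complex.ofReal_cpow (by linarith [hx.2])]
    push_cast
    rfl
  constructor
  · have h2 := (integrableOn_congr_fun hcongr measurableSet_Ioo).1 h1
    exact h2.re
  · have h3 := Complex.betaIntegral_eq_Gamma_mul_div (p : ℂ) (q : ℂ) (by simpa) (by simpa)
    rw [Complex.betaIntegral, intervalIntegral.integral_of_le zero_le_one,
      integral_Ioc_eq_integral_Ioo, setIntegral_congr_fun measurableSet_Ioo hcongr,
      integral_complex_ofReal, ← Complex.ofReal_add, Complex.Gamma_ofReal, Complex.Gamma_ofReal,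
      Complex.Gamma_ofReal] at h3
    exact_mod_cast h3

open MeasureTheory Set in
theorem kummer_int {τ b c : ℝ} (z : ℝ) (hb : 0 < b) (hbc : b < c) (hτ : 0 < τ) :
    IntegrableOn (fun t : ℝ => t ^ (b - 1) * (1 - t) ^ (c - b - 1) * Real.exp (z * t ^ τ))
      (Ioo 0 1) := by
  refine Integrable.mul_bdd (c := Real.exp |z|) (beta_aux hb (sub_pos.2 hbc)).1 ?_ ?_
  · exact (by fun_prop : Measurable fun t : ℝ => Real.exp (z * t ^ τ)).aestronglyMeasurable
  · filter_upwards [ae_restrict_mem measurableSet_Ioo] with t ht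
    rw [Real.norm_eq_abs, Real.abs_exp, Real.exp_le_exp]
    have h1 : t ^ τ ≤ 1 := Real.rpow_le_one ht.1.le ht.2.le hτ.le
    have h0 : 0 ≤ t ^ τ := Real.rpow_nonneg ht.1.le _
    calc z * t ^ τ ≤ |z| * t ^ τ := by gcongr; exact le_abs_self z
      _ ≤ |z| * 1 := by gcongr
      _ = |z| := mul_one _

open MeasureTheory Set in
theorem kummer_rep {τ b c : ℝ} (z : ℝ) (hb : 0 < b) (hbc : b < c) (hτ : 0 < τ) :
    kummerTau τ b c z * Real.Gamma (c - b) =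
      ∫ t in Ioo (0:ℝ) 1, t ^ (b - 1) * (1 - t) ^ (c - b - 1) * Real.exp (z * t ^ τ) := by
  have hq : 0 < c - b := sub_pos.2 hbc
  have hpk : ∀ k : ℕ, 0 < b + k * τ := fun k => by positivity
  let F : ℕ → ℝ → ℝ := fun k t =>
    (z ^ k / (k.factorial : ℝ)) * (t ^ (b + k * τ - 1) * (1 - t) ^ (c - b - 1))
  have hFint : ∀ k, Integrable (F k) (volume.restrict (Ioo 0 1)) := fun k =>
    ((beta_aux (hpk k) hq).1).const_mul _
  have hnorm : ∀ k, ∫ t in Ioo (0:ℝ) 1, ‖F k t‖ ≤ (|z| ^ k / (k.factorial : ℝ)) *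
      ∫ t in Ioo (0:ℝ) 1, t ^ (b - 1) * (1 - t) ^ (c - b - 1) := by
    intro k
    rw [← integral_const_mul]
    refine setIntegral_mono_on (hFint k).norm ((beta_aux hb hq).1.const_mul _)
      measurableSet_Ioo ?_
    intro t ht
    have h1t : 0 ≤ (1 - t) ^ (c - b - 1) := Real.rpow_nonneg (by linarith [ht.2]) _
    have ht0 : 0 ≤ t ^ (b + k * τ - 1) := Real.rpow_nonneg ht.1.le _
    have hle : t ^ (b + k * τ - 1) ≤ t ^ (b - 1) :=
      Real.rpow_le_rpow_of_exponent_ge ht.1 ht.2.le (by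
        have : 0 ≤ k * τ := by positivity
        linarith)
    simp only [F]
    rw [norm_mul, norm_div, norm_pow, Real.norm_eq_abs, Real.norm_natCast,
      Real.norm_of_nonneg (mul_nonneg ht0 h1t)]
    gcongr
  have hsum : Summable fun k => ∫ t in Ioo (0:ℝ) 1, ‖F k t‖ :=
    Summable.of_nonneg_of_le (fun k => integral_nonneg fun t => norm_nonneg _) hnorm
      ((Real.summable_pow_div_factorial |z|).mul_right _)
  have key := integral_tsum_of_summable_integral_norm hFint hsum
  rw [kummerTau, ← tsum_mul_right]
  calc _ = ∑' k, ∫ t in Ioo (0:ℝ) 1, F k t := by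
        refine tsum_congr fun k => ?_
        simp only [F]
        rw [integral_const_mul, (beta_aux (hpk k) hq).2,
          show b + k * τ + (c - b) = c + k * τ by ring]
        ring
    _ = _ := by
        rw [key]
        refine setIntegral_congr_fun measurableSet_Ioo fun t ht => ?_
        have he := (NormedSpace.expSeries_div_hasSum_exp (z * t ^ τ)).mul_left
          (t ^ (b - 1) * (1 - t) ^ (c - b - 1))
        rw [← Real.exp_eq_exp_ℝ] at he
        rw [← he.tsum_eq]
        refine tsum_congr fun k => ?_
        simp only [F]
        rw [show b + k * τ - 1 = (b - 1) + τ * k by ring, Real.rpow_add ht.1,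
          Real.rpow_mul ht.1.le, Real.rpow_natCast, mul_pow]
        ring

open MeasureTheory Set in
theorem kummer_pos {τ b c : ℝ} (z : ℝ) (hb : 0 < b) (hbc : b < c) (hτ : 0 < τ) :
    0 < kummerTau τ b c z := by
  have hq : 0 < c - b := sub_pos.2 hbc
  have hG := Real.Gamma_pos_of_pos hq
  refine pos_of_mul_pos_left ?_ hG.le
  rw [kummer_rep z hb hbc hτ]
  have h := (beta_aux hb hq)
  have hpos : 0 < Real.exp (-|z|) * ∫ t in Ioo (0:ℝ) 1, t ^ (b - 1) * (1 - t) ^ (c - b - 1) := by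
    rw [h.2]
    have := Real.Gamma_pos_of_pos hb
    have := Real.Gamma_pos_of_pos (add_pos hb hq)
    positivity
  refine hpos.trans_le ?_
  rw [← integral_const_mul]
  refine setIntegral_mono_on (h.1.const_mul _) (kummer_int z hb hbc hτ) measurableSet_Ioo ?_
  intro t ht
  have h1t : 0 ≤ (1 - t) ^ (c - b - 1) := Real.rpow_nonneg (by linarith [ht.2]) _
  have ht0 : 0 ≤ t ^ (b - 1) := Real.rpow_nonneg ht.1.le _
  rw [mul_comm]
  gcongr
  have h1 : t ^ τ ≤ 1 := Real.rpow_le_one ht.1.le ht.2.le hτ.le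
  have h0 : 0 ≤ t ^ τ := Real.rpow_nonneg ht.1.le _
  have : |z| * t ^ τ ≤ |z| * 1 := by gcongr
  have : -|z| * t ^ τ ≤ z * t ^ τ := by gcongr; exact neg_abs_le z
  linarith

/-- The ratio `z ↦ φ^τ(b+δτ, c+δτ, −z) / φ^τ(b, c, −z)` is decreasing on (0,1). -/
theorem kummerTau_ratio_antitone (b c τ δ : ℝ)
    (hb : 0 < b) (hbc : b < c) (hτ : 0 < τ) (hδ : 0 < δ) :
    AntitoneOn (fun z => kummerTau τ (b + δ * τ) (c + δ * τ) (-z) / kummerTau τ b c (-z))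
      (Set.Ioo 0 1) := by
  intro x _ y _ hxy
  simp only
  have hδτ : 0 < δ * τ := by positivity
  have hb' : 0 < b + δ * τ := by positivity
  have hbc' : b + δ * τ < c + δ * τ := by linarith
  have hG := Real.Gamma_pos_of_pos (sub_pos.2 hbc)
  rw [le_div_iff₀ (kummer_pos _ hb hbc hτ)]
  set m := kummerTau τ (b + δ * τ) (c + δ * τ) (-y) / kummerTau τ b c (-y) with hm
  have hm0 : 0 < m := div_pos (kummer_pos _ hb' hbc' hτ) (kummer_pos _ hb hbc hτ)
  have hmy : kummerTau τ (b + δ * τ) (c + δ * τ) (-y) = m * kummerTau τ b c (-y) := by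
    rw [hm, div_mul_cancel₀ _ (kummer_pos _ hb hbc hτ).ne']
  refine le_of_mul_le_mul_right ?_ hG
  have e : c + δ * τ - (b + δ * τ) = c - b := by ring
  have R := fun z => kummer_rep (-z) hb hbc hτ
  have R' := fun z => kummer_rep (-z) hb' hbc' hτ
  have I := fun z => kummer_int (-z) hb hbc hτ
  have I' := fun z => kummer_int (-z) hb' hbc' hτ
  simp only [e] at R' I'
  set t0 := m ^ (δ * τ)⁻¹ with ht0
  have ht0pos : 0 < t0 := Real.rpow_pos_of_pos hm0 _
  have ht0m : t0 ^ (δ * τ) = m := Real.rpow_inv_rpow hm0.le hδτ.ne'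
  have hmain := MeasureTheory.setIntegral_mono_on
    (((I' y).sub ((I y).const_mul m)).const_mul (Real.exp ((y - x) * t0 ^ τ)))
    ((I' x).sub ((I x).const_mul m)) measurableSet_Ioo (fun t ht => by
      simp only [Pi.sub_apply]
      have h1t : 0 ≤ (1 - t) ^ (c - b - 1) := Real.rpow_nonneg (by linarith [ht.2]) _
      have htb : 0 ≤ t ^ (b - 1) := Real.rpow_nonneg ht.1.le _
      have hexp : Real.exp (-x * t ^ τ) =
          Real.exp (-y * t ^ τ) * Real.exp ((y - x) * t ^ τ) := by
        rw [← Real.exp_add]; congr 1; ring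
      have hw : t ^ (b + δ * τ - 1) = t ^ (b - 1) * t ^ (δ * τ) := by
        rw [← Real.rpow_add ht.1]; congr 1; ring
      have hprod : 0 ≤ (t ^ (δ * τ) - m) *
          (Real.exp ((y - x) * t ^ τ) - Real.exp ((y - x) * t0 ^ τ)) := by
        rw [← ht0m]
        rcases le_total t t0 with h | h
        · refine mul_nonneg_of_nonpos_of_nonpos (sub_nonpos.2 ?_) (sub_nonpos.2 ?_)
          · exact Real.rpow_le_rpow ht.1.le h hδτ.le
          · exact Real.exp_le_exp.2 (mul_le_mul_of_nonneg_left
              (Real.rpow_le_rpow ht.1.le h hτ.le) (sub_nonneg.2 hxy))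
        · refine mul_nonneg (sub_nonneg.2 ?_) (sub_nonneg.2 ?_)
          · exact Real.rpow_le_rpow ht0pos.le h hδτ.le
          · exact Real.exp_le_exp.2 (mul_le_mul_of_nonneg_left
              (Real.rpow_le_rpow ht0pos.le h hτ.le) (sub_nonneg.2 hxy))
      have hall := mul_nonneg (mul_nonneg (mul_nonneg htb h1t) (Real.exp_pos (-y * t ^ τ)).le) hprod
      rw [hexp, hw]
      linarith)
  simp only [Pi.sub_apply] at hmain
  rw [MeasureTheory.integral_const_mul, MeasureTheory.integral_sub (I' y) ((I y).const_mul m),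
    MeasureTheory.integral_sub (I' x) ((I x).const_mul m), MeasureTheory.integral_const_mul,
    MeasureTheory.integral_const_mul, ← R, ← R', ← R, ← R', hmy] at hmain
  have hz : m * kummerTau τ b c (-y) * Real.Gamma (c - b) -
    m * (kummerTau τ b c (-y) * Real.Gamma (c - b)) = 0 := by ring
  rw [hz] at hmain
  linarith
end
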